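/- Let X be a real linear space, (Y, N) a fuzzy normed space, (Z, N′) a fuzzy normed space, and φ : X × X → Z. Suppose f, g, h : X → Y are even functions with f(0) = g(0) = h(0) = 0 such that N (f(x+y) + f(x−y) − 2g(x) − 2h(y)) t ≥ N′ (φ(x, y)) t for all x, y ∈ X and all t ∈ ℝ. Then for all x, y ∈ X and t > 0, N (f(x+y) + f(x−y) − 2f(x) − 2f(y)) t ≥ min {N′ (φ(x,y)) (t/3), N′ (φ(x,0)) (t/3), N′ (φ(0,y)) (t/3)}. -/

import Mathlib

/-!
Let `D f g h x y = f (x + y) + f (x - y) - 2 g x - 2 h y`. If `f` is even and `g`, `h` vanish at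
`0`, then `D f g h x 0 = 2 f x - 2 g x` and `D f g h 0 y = 2 f y - 2 h y`, so subtracting both from
`D f g h x y` replaces `g` and `h` by `f`. The triangle inequality for the three terms, each given
a third of `t`, is the estimate.
-/

open Filter Finset

/-- A fuzzy norm on a real vector space, following Bag–Samanta. -/
structure IsFuzzyNorm {X : Type*} [AddCommGroup X] [Module ℝ X] (N : X → ℝ → ℝ) : Prop where
  nonneg : ∀ (x : X) (t : ℝ), 0 ≤ N x t
  le_one : ∀ (x : X) (t : ℝ), N x t ≤ 1
  eq_zero_of_nonpos : ∀ (x : X) (c : ℝ), c ≤ 0 → N x c = 0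
  eq_zero_iff : ∀ x : X, x = 0 ↔ ∀ c : ℝ, 0 < c → N x c = 1
  smul_eq : ∀ (c : ℝ) (x : X) (t : ℝ), c ≠ 0 → N (c • x) t = N x (t / |c|)
  min_le_add : ∀ (x y : X) (s t : ℝ), min (N x s) (N y t) ≤ N (x + y) (s + t)
  mono : ∀ x : X, Monotone (N x)
  tendsto_one : ∀ x : X, Tendsto (N x) atTop (nhds 1)

/-- Convergence of a sequence to a fuzzy limit in a fuzzy normed space. -/
def FuzzyTendsto {X : Type*} [AddCommGroup X] [Module ℝ X] (N : X → ℝ → ℝ)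
    (xs : ℕ → X) (x : X) : Prop :=
  ∀ t : ℝ, 0 < t → Tendsto (fun n => N (xs n - x) t) atTop (nhds 1)

/-- Cauchy sequences in a fuzzy normed space. -/
def FuzzyCauchy {X : Type*} [AddCommGroup X] [Module ℝ X] (N : X → ℝ → ℝ)
    (xs : ℕ → X) : Prop :=
  ∀ ε : ℝ, 0 < ε → ∀ t : ℝ, 0 < t → ∃ n₀ : ℕ, ∀ n ≥ n₀, ∀ p : ℕ, 0 < p →
    1 - ε < N (xs (n + p) - xs n) t

/-- A fuzzy normed space is complete (a fuzzy Banach space) if every Cauchy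
sequence converges. -/
def IsFuzzyComplete {X : Type*} [AddCommGroup X] [Module ℝ X] (N : X → ℝ → ℝ) : Prop :=
  ∀ xs : ℕ → X, FuzzyCauchy N xs → ∃ x : X, FuzzyTendsto N xs x

/-- Quadratic functional equation. -/
def IsQuadratic {X Y : Type*} [AddCommGroup X] [AddCommGroup Y] (Q : X → Y) : Prop :=
  ∀ x y : X, Q (x + y) + Q (x - y) = 2 • Q x + 2 • Q y

/-- Additive functional equation. -/
def IsAdditive {X Y : Type*} [AddCommGroup X] [AddCommGroup Y] (T : X → Y) : Prop :=
  ∀ x y : X, T (x + y) = T x + T y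

/-- The defect of the Pexider form `f (x + y) + f (x - y) = 2 g x + 2 h y` of the quadratic
functional equation; for `g = h = f` it measures how far `f` is from being quadratic. -/
def pexiderDefect {X Y : Type*} [AddGroup X] [AddCommGroup Y] (f g h : X → Y) (x y : X) : Y :=
  f (x + y) + f (x - y) - 2 • g x - 2 • h y

theorem pexiderDefect_self_eq_sub_sub {X Y : Type*} [AddGroup X] [AddCommGroup Y] {f g h : X → Y}
    (hf : ∀ x, f (-x) = f x) (hgh : g 0 + h 0 = 0) (x y : X) :
    pexiderDefect f f f x y =
      pexiderDefect f g h x y - pexiderDefect f g h x 0 - pexiderDefect f g h 0 y := by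
  have hg : g 0 = -h 0 := eq_neg_of_add_eq_zero_left hgh
  simp only [pexiderDefect, add_zero, sub_zero, zero_add, zero_sub, hf, hg]
  abel

namespace IsFuzzyNorm

variable {Y : Type*} [AddCommGroup Y] [Module ℝ Y] {N : Y → ℝ → ℝ}

theorem neg_eq (hN : IsFuzzyNorm N) (y : Y) (t : ℝ) : N (-y) t = N y t := by
  simpa using hN.smul_eq (-1) y t (by norm_num)

theorem min_le_sub (hN : IsFuzzyNorm N) (x y : Y) (s t : ℝ) :
    min (N x s) (N y t) ≤ N (x - y) (s + t) := by
  simpa only [hN.neg_eq, ← sub_eq_add_neg] using hN.min_le_add x (-y) s t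

theorem min_min_le_sub_sub (hN : IsFuzzyNorm N) (x y z : Y) (r s t : ℝ) :
    min (min (N x r) (N y s)) (N z t) ≤ N (x - y - z) (r + s + t) :=
  (min_le_min_right _ (hN.min_le_sub x y r s)).trans (hN.min_le_sub (x - y) z (r + s) t)

end IsFuzzyNorm

theorem fuzzy_pexider_even_almost_quadratic_general
    {X Y : Type*} [AddGroup X] [AddCommGroup Y] [Module ℝ Y] {N : Y → ℝ → ℝ}
    (hN : IsFuzzyNorm N) {ψ : X → X → ℝ → ℝ} {f g h : X → Y}
    (hf : ∀ x, f (-x) = f x) (hgh : g 0 + h 0 = 0)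
    (hψ : ∀ x y t, ψ x y t ≤ N (pexiderDefect f g h x y) t) (x y : X) (r s t : ℝ) :
    min (min (ψ x y r) (ψ x 0 s)) (ψ 0 y t) ≤ N (pexiderDefect f f f x y) (r + s + t) := by
  rw [pexiderDefect_self_eq_sub_sub hf hgh]
  exact (min_le_min (min_le_min (hψ x y r) (hψ x 0 s)) (hψ 0 y t)).trans
    (hN.min_min_le_sub_sub _ _ _ r s t)

/-- Estimate (3.19) in the proof of Proposition 3.2: the even part is
approximately quadratic. -/
theorem fuzzy_pexider_even_almost_quadratic
    {X Y Z : Type*} [AddCommGroup X] [Module ℝ X]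
    [AddCommGroup Y] [Module ℝ Y] [AddCommGroup Z] [Module ℝ Z]
    (N : Y → ℝ → ℝ) (N' : Z → ℝ → ℝ)
    (hN : IsFuzzyNorm N) (hN' : IsFuzzyNorm N')
    (φ : X × X → Z)
    (f g h : X → Y)
    (hfeven : ∀ x : X, f (-x) = f x)
    (hgeven : ∀ x : X, g (-x) = g x)
    (hheven : ∀ x : X, h (-x) = h x)
    (hf0 : f 0 = 0) (hg0 : g 0 = 0) (hh0 : h 0 = 0)
    (hineq : ∀ x y : X, ∀ t : ℝ,
      N' (φ (x, y)) t ≤ N (f (x + y) + f (x - y) - 2 • g x - 2 • h y) t) :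
    ∀ x y : X, ∀ t : ℝ, 0 < t →
      min (min (N' (φ (x, y)) (t / 3)) (N' (φ (x, 0)) (t / 3))) (N' (φ (0, y)) (t / 3)) ≤
        N (f (x + y) + f (x - y) - 2 • f x - 2 • f y) t := by
  intro x y t _
  simpa only [add_thirds, pexiderDefect] using fuzzy_pexider_even_almost_quadratic_general
    (ψ := fun x y => N' (φ (x, y))) hN hfeven (by rw [hg0, hh0, add_zero]) hineq x y
    (t / 3) (t / 3) (t / 3)
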